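/- Tracking collections converge to a delta distribution on the curve (flat-space version of Geroch–Weatherall Theorem, main theorem): let γ : ℝ → ℝ⁴ be smooth with η(γ'(t), γ'(t)) = 1 and γ'(t) future timelike for all t, and let 𝒞 be a collection of smooth fields T : ℝ⁴ → Matrix (Fin 4) (Fin 4) ℝ with symmetric values, each satisfying the dominant energy condition at every point and each divergence-free. If 𝒞 tracks γ, then there exist sequences cₙ > 0 of reals and Tₙ ∈ 𝒞 such that for every smooth, compactly supported field x : ℝ⁴ → Matrix (Fin 4) (Fin 4) ℝ with symmetric values, cₙ * ∫_{ℝ⁴} ⟨Tₙ(p), x(p)⟩ dp converges (as n → ∞) to ∫_ℝ Σᵢⱼ γ'(t) i * γ'(t) j * x(γ(t)) i j dt. -/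

import Mathlib

open Matrix MeasureTheory Filter Topology

noncomputable section

abbrev Vec4 : Type := Fin 4 → ℝ
abbrev Mat4 : Type := Matrix (Fin 4) (Fin 4) ℝ

/-- The Minkowski inner product on ℝ⁴. -/
def mink (x y : Vec4) : ℝ := x 0 * y 0 - x 1 * y 1 - x 2 * y 2 - x 3 * y 3

/-- The matrix diag(1,-1,-1,-1). -/
def E : Mat4 := Matrix.diagonal ![1, -1, -1, -1]

def FutureCausal (x : Vec4) : Prop := 0 ≤ mink x x ∧ 0 ≤ x 0
def FutureTimelike (x : Vec4) : Prop := 0 < mink x x ∧ 0 < x 0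
def FutureNull (x : Vec4) : Prop := x ≠ 0 ∧ mink x x = 0 ∧ 0 < x 0
def UnitTimelike (x : Vec4) : Prop := FutureTimelike x ∧ mink x x = 1

/-- The dominant energy condition for a matrix. -/
def DEC (T : Mat4) : Prop :=
  ∀ ξ ζ : Vec4, FutureCausal ξ → FutureCausal ζ → 0 ≤ ∑ i, ∑ j, ξ i * T i j * ζ j

/-- ⟨T, x⟩ = Σᵢⱼ T i j * x i j. -/
def minner (T x : Mat4) : ℝ := ∑ i, ∑ j, T i j * x i j

/-- The cone D of finite sums of symmetrized products of future causal vectors. -/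
def coneD : Set Mat4 :=
  { x | ∃ (n : ℕ) (ξ ζ : Fin n → Vec4),
      (∀ k, FutureCausal (ξ k)) ∧ (∀ k, FutureCausal (ζ k)) ∧
      x = ∑ k, (1/2 : ℝ) • (vecMulVec (ξ k) (ζ k) + vecMulVec (ζ k) (ξ k)) }

/-- A symmetric matrix is generic if it lies in the interior of D, taken within
the space of symmetric matrices. -/
def Generic (x : Mat4) : Prop :=
  ∃ h : xᵀ = x, (⟨x, h⟩ : { A : Mat4 // Aᵀ = A }) ∈
    interior { A : { A : Mat4 // Aᵀ = A } | A.val ∈ coneD }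

/-- Partial derivative in the a-th coordinate direction. -/
def pd (a : Fin 4) (f : Vec4 → ℝ) (p : Vec4) : ℝ := fderiv ℝ f p (Pi.single a 1)

def SmoothMatField (T : Vec4 → Mat4) : Prop := ∀ a b, ContDiff ℝ (⊤ : ℕ∞) fun p => T p a b
def SymValued (T : Vec4 → Mat4) : Prop := ∀ p, (T p)ᵀ = T p
def DivFree (T : Vec4 → Mat4) : Prop := ∀ p b, ∑ a, pd a (fun q => T q a b) p = 0

/-- A collection of fields tracks a curve. -/
def Tracks (C : Set (Vec4 → Mat4)) (γ : ℝ → Vec4) : Prop :=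
  ∀ x : Vec4 → Mat4, SmoothMatField x → HasCompactSupport x → SymValued x →
    (∃ O : Set Vec4, IsOpen O ∧ Set.range γ ⊆ O ∧ ∀ p ∈ O, x p ∈ coneD) →
    (∃ t₀ : ℝ, Generic (x (γ t₀))) →
    ∃ T ∈ C, 0 < ∫ p, minner (T p) (x p)

/-- Maxwell stress-energy tensor of a field strength matrix. -/
def maxwellT (F : Mat4) : Mat4 :=
  F * E * F - ((1/4 : ℝ) * (E * F * E * F).trace) • E

/-- Source-free Maxwell equations. -/
def SolvesMaxwell (F : Vec4 → Mat4) : Prop :=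
  (∀ p b, ∑ a, E a a * pd a (fun q => F q a b) p = 0) ∧
  (∀ p a b c, pd a (fun q => F q b c) p + pd b (fun q => F q c a) p
      + pd c (fun q => F q a b) p = 0)

/-- Klein–Gordon stress-energy tensor. -/
def kgT (φ : Vec4 → ℝ) (m : ℝ) (p : Vec4) : Mat4 :=
  Matrix.of fun a b =>
    pd a φ p * pd b φ p
      - (1/2 : ℝ) * E a b * ((∑ c, E c c * (pd c φ p)^2) - m^2 * (φ p)^2)

/-- Mass-m Klein–Gordon equation. -/
def SolvesKG (φ : Vec4 → ℝ) (m : ℝ) : Prop :=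
  ∀ p, pd 0 (pd 0 φ) p - pd 1 (pd 1 φ) p - pd 2 (pd 2 φ) p - pd 3 (pd 3 φ) p
    + m^2 * φ p = 0

/-! ### The cone `coneD` -/

lemma coneD_add {A B : Mat4} (hA : A ∈ coneD) (hB : B ∈ coneD) : A + B ∈ coneD := by
  obtain ⟨n, ξ, ζ, hξ, hζ, rfl⟩ := hA
  obtain ⟨m, ξ', ζ', hξ', hζ', rfl⟩ := hB
  refine ⟨n + m, Fin.append ξ ξ', Fin.append ζ ζ', ?_, ?_, ?_⟩
  · intro k
    induction k using Fin.addCases <;> simp [hξ, hξ']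
  · intro k
    induction k using Fin.addCases <;> simp [hζ, hζ']
  · simp [Fin.sum_univ_add]

lemma FutureCausal.smul {x : Vec4} (hx : FutureCausal x) {c : ℝ} (hc : 0 ≤ c) :
    FutureCausal (c • x) := by
  refine ⟨?_, mul_nonneg hc hx.2⟩
  have : mink (c • x) (c • x) = c ^ 2 * mink x x := by
    simp [mink]; ring
  rw [this]
  exact mul_nonneg (sq_nonneg c) hx.1

lemma coneD_smul {A : Mat4} (hA : A ∈ coneD) {c : ℝ} (hc : 0 ≤ c) : c • A ∈ coneD := by
  obtain ⟨n, ξ, ζ, hξ, hζ, rfl⟩ := hA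
  refine ⟨n, fun k => c • ξ k, ζ, fun k => (hξ k).smul hc, hζ, ?_⟩
  rw [Finset.smul_sum]
  refine Finset.sum_congr rfl fun k _ => ?_
  rw [smul_vecMulVec, vecMulVec_smul, ← smul_add, smul_comm]

lemma zero_mem_coneD : (0 : Mat4) ∈ coneD :=
  ⟨0, Fin.elim0, Fin.elim0, fun k => k.elim0, fun k => k.elim0, by simp⟩

lemma coneD_sum {ι : Type*} (s : Finset ι) (A : ι → Mat4) (hA : ∀ i ∈ s, A i ∈ coneD) :
    ∑ i ∈ s, A i ∈ coneD :=
  Finset.sum_induction A (· ∈ coneD) (fun _ _ => coneD_add) zero_mem_coneD hA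

/-- The symmetrized product of two vectors. -/
def symProd (ξ ζ : Vec4) : Mat4 := (1/2 : ℝ) • (vecMulVec ξ ζ + vecMulVec ζ ξ)

lemma symProd_mem_coneD {ξ ζ : Vec4} (hξ : FutureCausal ξ) (hζ : FutureCausal ζ) :
    symProd ξ ζ ∈ coneD :=
  ⟨1, fun _ => ξ, fun _ => ζ, fun _ => hξ, fun _ => hζ, by simp [symProd]⟩

/-- The `i`-th coordinate vector. -/
abbrev coordVec (i : Fin 4) : Vec4 := Pi.single i 1

/-- The square of the time covector. -/
def timeMat : Mat4 := vecMulVec (coordVec 0) (coordVec 0)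

lemma timeMat_apply (i j : Fin 4) : timeMat i j = if i = 0 ∧ j = 0 then 1 else 0 := by
  simp only [timeMat, vecMulVec_apply, coordVec, Pi.single_apply]
  split_ifs <;> simp_all

lemma futureCausal_time_add (i : Fin 4) {σ : ℝ} (hσ : σ = 1 ∨ σ = -1) :
    FutureCausal (coordVec 0 + σ • coordVec i) := by
  rcases hσ with rfl | rfl <;> fin_cases i <;> constructor <;> simp [mink]

lemma timeMat_mem_coneD : timeMat ∈ coneD := by
  have h : FutureCausal (coordVec 0) := ⟨by simp [mink], by simp⟩
  have := symProd_mem_coneD h h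
  convert this using 1
  rw [symProd, timeMat, ← two_smul ℝ, smul_smul]
  norm_num

lemma timeMat_add_symProd_mem_coneD (i j : Fin 4) {σ : ℝ} (hσ : σ = 1 ∨ σ = -1) :
    timeMat + σ • symProd (coordVec i) (coordVec j) ∈ coneD := by
  have h1 := symProd_mem_coneD (futureCausal_time_add i (.inl rfl)) (futureCausal_time_add j hσ)
  have h2 := symProd_mem_coneD (futureCausal_time_add i (.inr rfl))
    (futureCausal_time_add j (σ := -σ) (by rcases hσ with rfl | rfl <;> simp))
  convert coneD_smul (coneD_add h1 h2) (c := 1/2) (by norm_num) using 1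
  ext a b
  simp only [timeMat, symProd, vecMulVec_apply, Matrix.add_apply, Matrix.smul_apply, Pi.add_apply,
    Pi.smul_apply, smul_eq_mul]
  ring

lemma mem_coneD_of_near {A : Mat4} (hA : Aᵀ = A) {c : ℝ}
    (h : ∑ i, ∑ j, |A i j - c * timeMat i j| ≤ c) : A ∈ coneD := by
  have hsym : ∀ i j, A j i = A i j := fun i j => congrFun (congrFun hA i) j
  set B : Fin 4 → Fin 4 → ℝ := fun i j => A i j - c * timeMat i j with hB
  have hBs : ∀ i j, B j i = B i j := by
    intro i j
    simp only [hB, hsym i j, timeMat_apply, and_comm]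
  have key : A = (c - ∑ i, ∑ j, |B i j|) • timeMat
      + ∑ i, ∑ j, |B i j| • (timeMat +
        (if 0 ≤ B i j then (1:ℝ) else -1) • symProd (coordVec i) (coordVec j)) := by
    have h1 : ∀ i j, |B i j| • (timeMat +
        (if 0 ≤ B i j then (1:ℝ) else -1) • symProd (coordVec i) (coordVec j))
        = |B i j| • timeMat + B i j • symProd (coordVec i) (coordVec j) := by
      intro i j
      rw [smul_add, smul_smul]
      congr 2
      split_ifs with h0
      · rw [abs_of_nonneg h0, mul_one]
      · rw [abs_of_neg (not_le.mp h0)]; ring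
    simp only [h1, Finset.sum_add_distrib, ← Finset.sum_smul]
    rw [← add_assoc, ← add_smul, sub_add_cancel]
    ext a b
    have h2 : ∀ i j, symProd (coordVec i) (coordVec j) a b
        = 1/2 * ((if a = i then 1 else 0) * (if b = j then 1 else 0)
          + (if a = j then 1 else 0) * (if b = i then 1 else 0)) := by
      intro i j
      simp [symProd, vecMulVec_apply, coordVec, Pi.single_apply]
    simp only [Matrix.add_apply, Matrix.sum_apply, Matrix.smul_apply, smul_eq_mul, h2]
    have h3 : ∑ i, ∑ j, B i j * (1/2 * ((if a = i then (1:ℝ) else 0) * (if b = j then 1 else 0)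
          + (if a = j then 1 else 0) * (if b = i then 1 else 0))) = 1/2 * (B a b + B b a) := by
      simp [mul_add, Finset.sum_add_distrib]
      ring
    rw [h3, hBs a b]
    simp only [hB]
    ring
  rw [key]
  refine coneD_add (coneD_smul timeMat_mem_coneD (sub_nonneg.2 h)) ?_
  refine coneD_sum _ _ fun i _ => coneD_sum _ _ fun j _ => coneD_smul ?_ (abs_nonneg _)
  exact timeMat_add_symProd_mem_coneD i j (by split_ifs <;> simp)

lemma timeMat_transpose : timeMatᵀ = timeMat := by
  ext i j
  simp [timeMat_apply, and_comm]

lemma generic_smul_timeMat {c : ℝ} (hc : 0 < c) : Generic (c • timeMat) := by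
  refine ⟨by rw [transpose_smul, timeMat_transpose], ?_⟩
  rw [mem_interior]
  refine ⟨{A | ∑ i, ∑ j, |A.val i j - c * timeMat i j| < c}, ?_, ?_, ?_⟩
  · exact fun A hA => mem_coneD_of_near A.2 (le_of_lt hA)
  · refine isOpen_lt ?_ continuous_const
    refine continuous_finsetSum _ fun i _ => continuous_finsetSum _ fun j _ => ?_
    have : Continuous fun A : { A : Mat4 // Aᵀ = A } => A.val i j :=
      continuous_subtype_val.matrix_elem i j
    exact (this.sub continuous_const).abs
  · simpa using hc

/-! ### Consequences of the dominant energy condition -/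

lemma DEC.zero_zero_nonneg {T : Mat4} (hT : DEC T) : 0 ≤ T 0 0 := by
  have h : FutureCausal (coordVec 0) := ⟨by simp [mink], by simp⟩
  simpa [Pi.single_apply] using hT _ _ h h

lemma DEC.abs_apply_le {T : Mat4} (hT : DEC T) (i j : Fin 4) : |T i j| ≤ T 0 0 := by
  have h : ∀ σ : ℝ, σ = 1 ∨ σ = -1 → 0 ≤ 2 * T 0 0 + 2 * (σ * T i j) := by
    intro σ hσ
    have h1 := hT _ _ (futureCausal_time_add i (.inl rfl)) (futureCausal_time_add j hσ)
    have h2 := hT _ _ (futureCausal_time_add i (.inr rfl))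
      (futureCausal_time_add j (σ := -σ) (by rcases hσ with rfl | rfl <;> simp))
    simp only [Pi.add_apply, Pi.smul_apply, coordVec, Pi.single_apply, smul_eq_mul, mul_ite, ite_mul,
      mul_one, mul_zero, add_mul, mul_add, one_mul, zero_mul, Finset.sum_add_distrib,
      Finset.sum_ite_eq', Finset.mem_univ, if_true] at h1 h2
    linarith
  have h1 := h 1 (.inl rfl)
  have h2 := h (-1) (.inr rfl)
  exact abs_le.2 ⟨by linarith, by linarith⟩

/-! ### Cutoff functions adapted to a curve parametrized by time -/

/-- The squared distance, within the slice of constant time, to the curve `y`. -/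
def tubeDist (y : ℝ → Vec4) (p : Vec4) : ℝ := ∑ i, (p i - y (p 0) i) ^ 2

/-- A smooth function equal to `1` near the curve `y` and supported in a tube around it. -/
def tubeCutoff (y : ℝ → Vec4) (p : Vec4) : ℝ := Real.smoothTransition (2 - tubeDist y p)

/-- Smooth compactly supported functions vanishing near the curve `y`, which are eventually `1`
on every compact set disjoint from the curve. -/
def offCurve (y : ℝ → Vec4) (n : ℕ) (p : Vec4) : ℝ :=
  Real.smoothTransition (n + 1 - ∑ i, p i ^ 2) * Real.smoothTransition (n * tubeDist y p - 1)

/-- The function `g` of time, cut off to a tube around `y`. -/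
def tubeFun (y : ℝ → Vec4) (g : ℝ → ℝ) (p : Vec4) : ℝ := g (p 0) * tubeCutoff y p

section Cutoff

variable {y : ℝ → Vec4}

lemma tubeDist_nonneg (p : Vec4) : 0 ≤ tubeDist y p :=
  Finset.sum_nonneg fun _ _ => sq_nonneg _

lemma tubeDist_eq_zero_iff {p : Vec4} : tubeDist y p = 0 ↔ p = y (p 0) := by
  rw [tubeDist, Finset.sum_eq_zero_iff_of_nonneg fun _ _ => sq_nonneg _]
  constructor
  · intro h
    funext i
    have := h i (Finset.mem_univ _)
    rw [sq_eq_zero_iff] at this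
    linarith
  · intro h i _
    rw [sq_eq_zero_iff, sub_eq_zero]
    exact congrFun h i

lemma tubeDist_curve (h0 : ∀ s, y s 0 = s) (s : ℝ) : tubeDist y (y s) = 0 := by
  rw [tubeDist_eq_zero_iff, h0]

lemma contDiff_tubeDist (hy : ContDiff ℝ (⊤ : ℕ∞) y) : ContDiff ℝ (⊤ : ℕ∞) (tubeDist y) := by
  unfold tubeDist
  have h : ∀ i, ContDiff ℝ (⊤ : ℕ∞) fun s => y s i := contDiff_pi.1 hy
  refine ContDiff.sum fun i _ => ?_
  have h1 : ContDiff ℝ (⊤ : ℕ∞) fun p : Vec4 => y (p 0) i :=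
    (h i).comp (contDiff_apply ℝ ℝ (0 : Fin 4))
  exact ((contDiff_apply ℝ ℝ i).sub h1).pow 2

lemma contDiff_tubeCutoff (hy : ContDiff ℝ (⊤ : ℕ∞) y) :
    ContDiff ℝ (⊤ : ℕ∞) (tubeCutoff y) :=
  Real.smoothTransition.contDiff.comp (contDiff_const.sub (contDiff_tubeDist hy))

lemma tubeCutoff_eq_one {p : Vec4} (h : tubeDist y p ≤ 1) : tubeCutoff y p = 1 :=
  Real.smoothTransition.one_of_one_le (by linarith)

lemma tubeCutoff_nonneg (p : Vec4) : 0 ≤ tubeCutoff y p := Real.smoothTransition.nonneg _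

lemma contDiff_tubeFun (hy : ContDiff ℝ (⊤ : ℕ∞) y) {g : ℝ → ℝ} (hg : ContDiff ℝ (⊤ : ℕ∞) g) :
    ContDiff ℝ (⊤ : ℕ∞) (tubeFun y g) :=
  (hg.comp (contDiff_apply ℝ ℝ (0 : Fin 4))).mul (contDiff_tubeCutoff hy)

lemma hasCompactSupport_tubeFun (hy : Continuous y) {g : ℝ → ℝ} (hg : HasCompactSupport g) :
    HasCompactSupport (tubeFun y g) := by
  have hK : IsCompact ((fun q : ℝ × Vec4 => y q.1 + q.2) ''
      (tsupport g ×ˢ Metric.closedBall (0 : Vec4) 2)) :=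
    (hg.isCompact.prod (isCompact_closedBall _ _)).image (by fun_prop)
  refine HasCompactSupport.of_support_subset_isCompact hK fun p hp => ?_
  have hp' : g (p 0) * tubeCutoff y p ≠ 0 := hp
  refine ⟨(p 0, p - y (p 0)), ⟨subset_tsupport _ (left_ne_zero_of_mul hp'), ?_⟩, by simp⟩
  have h2 : tubeDist y p ≤ 2 := by
    by_contra! h
    exact right_ne_zero_of_mul hp' (Real.smoothTransition.zero_of_nonpos (by linarith))
  rw [mem_closedBall_zero_iff, pi_norm_le_iff_of_nonneg (by norm_num)]
  intro i
  have h3 : (p i - y (p 0) i) ^ 2 ≤ tubeDist y p :=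
    Finset.single_le_sum (f := fun i => (p i - y (p 0) i) ^ 2) (fun _ _ => sq_nonneg _)
      (Finset.mem_univ i)
  exact abs_le_of_sq_le_sq (by simpa using (by linarith : (p i - y (p 0) i) ^ 2 ≤ 2 ^ 2))
    (by norm_num)

lemma contDiff_offCurve (hy : ContDiff ℝ (⊤ : ℕ∞) y) (n : ℕ) :
    ContDiff ℝ (⊤ : ℕ∞) (offCurve y n) := by
  refine ContDiff.mul ?_ ?_
  · refine Real.smoothTransition.contDiff.comp (contDiff_const.sub (ContDiff.sum fun i _ => ?_))
    exact (contDiff_apply ℝ ℝ i).pow 2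
  · exact Real.smoothTransition.contDiff.comp
      ((contDiff_const.mul (contDiff_tubeDist hy)).sub contDiff_const)

lemma hasCompactSupport_offCurve (n : ℕ) : HasCompactSupport (offCurve y n) := by
  refine HasCompactSupport.of_support_subset_isCompact
    (isCompact_closedBall (0 : Vec4) (n + 1)) fun p hp => ?_
  have hp' : _ * _ ≠ (0 : ℝ) := hp
  have h2 : ∑ i, p i ^ 2 ≤ n + 1 := by
    by_contra! h
    exact left_ne_zero_of_mul hp' (Real.smoothTransition.zero_of_nonpos (by linarith))
  rw [mem_closedBall_zero_iff, pi_norm_le_iff_of_nonneg (by positivity)]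
  intro i
  have h3 : p i ^ 2 ≤ ∑ i, p i ^ 2 :=
    Finset.single_le_sum (f := fun i => p i ^ 2) (fun _ _ => sq_nonneg _) (Finset.mem_univ i)
  have hn : (0 : ℝ) ≤ n := n.cast_nonneg
  exact abs_le_of_sq_le_sq (by nlinarith) (by positivity)

lemma offCurve_nonneg (n : ℕ) (p : Vec4) : 0 ≤ offCurve y n p :=
  mul_nonneg (Real.smoothTransition.nonneg _) (Real.smoothTransition.nonneg _)

lemma offCurve_eq_one {n : ℕ} {p : Vec4} (h1 : ∑ i, p i ^ 2 ≤ n) (h2 : 2 ≤ n * tubeDist y p) :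
    offCurve y n p = 1 := by
  rw [offCurve, Real.smoothTransition.one_of_one_le (by linarith),
    Real.smoothTransition.one_of_one_le (by linarith), mul_one]

lemma offCurve_eq_zero {n : ℕ} {p : Vec4} (h : n * tubeDist y p ≤ 1) : offCurve y n p = 0 := by
  rw [offCurve, Real.smoothTransition.zero_of_nonpos (x := _ - 1) (by linarith), mul_zero]

lemma hasCompactSupport_comp_curve {q : Vec4 → ℝ} (h0 : ∀ s, y s 0 = s)
    (hqc : HasCompactSupport q) : HasCompactSupport fun s => q (y s) := by
  refine HasCompactSupport.of_support_subset_isCompact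
    (hqc.isCompact.image (continuous_apply (0 : Fin 4))) fun s hs => ?_
  exact ⟨y s, subset_tsupport _ hs, h0 s⟩

end Cutoff

/-! ### Partial derivatives -/

lemma contDiff_pd {f : Vec4 → ℝ} (hf : ContDiff ℝ (⊤ : ℕ∞) f) (a : Fin 4) :
    ContDiff ℝ (⊤ : ℕ∞) (pd a f) :=
  (hf.fderiv_right (m := (⊤ : ℕ∞)) (by norm_cast)).clm_apply contDiff_const

lemma hasCompactSupport_pd {f : Vec4 → ℝ} (hf : HasCompactSupport f) (a : Fin 4) :
    HasCompactSupport (pd a f) :=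
  hf.fderiv_apply ℝ _

lemma pd_mul {f g : Vec4 → ℝ} {p : Vec4} (hf : DifferentiableAt ℝ f p)
    (hg : DifferentiableAt ℝ g p) (a : Fin 4) :
    pd a (fun q => f q * g q) p = f p * pd a g p + g p * pd a f p := by
  simp [pd, fderiv_fun_mul hf hg]

lemma pd_comp_time {g : ℝ → ℝ} {p : Vec4} (hg : DifferentiableAt ℝ g (p 0)) (a : Fin 4) :
    pd a (fun q => g (q 0)) p = if a = 0 then deriv g (p 0) else 0 := by
  have h := hg.hasDerivAt.comp_hasFDerivAt p
    (ContinuousLinearMap.proj (R := ℝ) (φ := fun _ : Fin 4 => ℝ) 0).hasFDerivAt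
  have h' : HasFDerivAt (fun q : Vec4 => g (q 0)) _ p := h
  rw [pd, h'.fderiv]
  simp [Pi.single_apply, eq_comm]

lemma pd_coord_sub {y : ℝ → Vec4} (hy : ContDiff ℝ (⊤ : ℕ∞) y) (p : Vec4) (a i : Fin 4) :
    pd a (fun q => q i - y (q 0) i) p
      = (if a = i then 1 else 0) - if a = 0 then deriv y (p 0) i else 0 := by
  have hd : DifferentiableAt ℝ y (p 0) := hy.contDiffAt.differentiableAt (by simp)
  have hdi : DifferentiableAt ℝ (fun s => y s i) (p 0) := differentiableAt_pi.1 hd i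
  have h1 : DifferentiableAt ℝ (fun q : Vec4 => y (q 0) i) p :=
    hdi.comp (f := fun q : Vec4 => q 0) p (differentiableAt_apply _ _)
  have h2 := pd_comp_time hdi a
  have h3 : deriv (fun s => y s i) (p 0) = deriv y (p 0) i :=
    (hasDerivAt_pi.1 hd.hasDerivAt i).deriv
  rw [h3] at h2
  rw [← h2, pd, pd, fderiv_fun_sub (differentiableAt_apply _ _) h1]
  simp [fderiv_apply, Pi.single_apply, eq_comm]

/-- A divergence-free field pairs to zero with the gradient of a test function. -/
lemma DivFree.integral_eq_zero {S : Vec4 → Mat4} (hS : SmoothMatField S) (hdiv : DivFree S)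
    {v : Vec4 → ℝ} (hv : ContDiff ℝ (⊤ : ℕ∞) v) (hvc : HasCompactSupport v) (b : Fin 4) :
    ∑ a, ∫ p, S p a b * pd a v p = 0 := by
  have hint : ∀ f g : Vec4 → ℝ, Continuous f → Continuous g → HasCompactSupport g →
      Integrable fun p => f p * g p := fun f g hf hg hgc =>
    (hf.mul hg).integrable_of_hasCompactSupport hgc.mul_left
  have hSc : ∀ a, Continuous fun p => S p a b := fun a => (hS a b).continuous
  have hSp : ∀ a, Continuous (pd a fun p => S p a b) := fun a => (contDiff_pd (hS a b) a).continuous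
  have h : ∀ a, ∫ p, S p a b * pd a v p = -∫ p, pd a (fun q => S q a b) p * v p := by
    intro a
    refine integral_mul_fderiv_eq_neg_fderiv_mul_of_integrable
      (hint _ _ (hSp a) hv.continuous hvc)
      (hint _ _ (hSc a) (contDiff_pd hv a).continuous (hasCompactSupport_pd hvc a))
      (hint _ _ (hSc a) hv.continuous hvc)
      (fun p _ => (hS a b).contDiffAt.differentiableAt (by simp))
      (fun p _ => hv.contDiffAt.differentiableAt (by simp))
  simp only [h]
  rw [Finset.sum_neg_distrib, ← integral_finsetSum _
    fun a _ => hint _ _ (hSp a) hv.continuous hvc]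
  simp only [← Finset.sum_mul, hdiv _ b, zero_mul, integral_zero, neg_zero]

/-! ### Sequences concentrating on a curve -/

/-- A sequence of conserved fields satisfying the dominant energy condition whose energy
concentrates on the curve `y`, normalized by a function `g` of time. -/
structure Concentrates (y : ℝ → Vec4) (g : ℝ → ℝ) (S : ℕ → Vec4 → Mat4) : Prop where
  smooth : ∀ n, SmoothMatField (S n)
  sym : ∀ n, SymValued (S n)
  dec : ∀ n p, DEC (S n p)
  divFree : ∀ n, DivFree (S n)
  integral_tube : ∀ n, ∫ p, S n p 0 0 * tubeFun y g p = 1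
  integral_off : ∀ n : ℕ, n * ∫ p, S n p 0 0 * offCurve y n p ≤ 1

lemma exists_bound_on_support {q : Vec4 → ℝ} (hc : HasCompactSupport q) :
    ∃ R : ℝ, ∀ p, q p ≠ 0 → ∑ i, p i ^ 2 ≤ R := by
  have hcont : Continuous fun p : Vec4 => ∑ i, p i ^ 2 := by fun_prop
  obtain ⟨R, hR⟩ := hc.isCompact.bddAbove_image hcont.continuousOn
  exact ⟨R, fun p hp => hR ⟨p, subset_tsupport _ hp, rfl⟩⟩

lemma exists_abs_le {q : Vec4 → ℝ} (hq : Continuous q) (hc : HasCompactSupport q) :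
    ∃ M : ℝ, 0 ≤ M ∧ ∀ p, |q p| ≤ M := by
  obtain ⟨M, hM⟩ := hc.exists_bound_of_continuous hq
  exact ⟨M, (norm_nonneg _).trans (hM 0), hM⟩

lemma hasCompactSupport_abs {q : Vec4 → ℝ} (hc : HasCompactSupport q) :
    HasCompactSupport fun p => |q p| :=
  hc.comp_left (g := fun r : ℝ => |r|) abs_zero

/-- A smooth compactly supported function with vanishing integral has a smooth compactly supported
primitive. -/
lemma exists_primitive {g : ℝ → ℝ} (hg : ContDiff ℝ (⊤ : ℕ∞) g) (hc : HasCompactSupport g)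
    (h : ∫ s, g s = 0) :
    ∃ G : ℝ → ℝ, ContDiff ℝ (⊤ : ℕ∞) G ∧ HasCompactSupport G ∧ deriv G = g := by
  obtain ⟨R, hR⟩ := hc.isCompact.isBounded.subset_closedBall 0
  have hzero : ∀ s, R < |s| → g s = 0 := by
    intro s hs
    by_contra hne
    have := hR (subset_tsupport _ hne)
    rw [mem_closedBall_zero_iff, Real.norm_eq_abs] at this
    linarith
  set r := |R| + 1 with hr
  have hRr : R < r := by have := le_abs_self R; linarith
  have hr0 : 0 < r := by positivity
  have hd : ∀ s, HasDerivAt (fun s => ∫ t in (-r)..s, g t) (g s) s := fun s =>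
    intervalIntegral.integral_hasDerivAt_right (hg.continuous.intervalIntegrable _ _)
      (hg.continuous.stronglyMeasurableAtFilter _ _) hg.continuous.continuousAt
  have hd' : deriv (fun s => ∫ t in (-r)..s, g t) = g := funext fun s => (hd s).deriv
  refine ⟨_, contDiff_infty_iff_deriv.2 ⟨fun s => (hd s).differentiableAt, ?_⟩, ?_, hd'⟩
  · rw [hd']; exact hg
  · refine HasCompactSupport.of_support_subset_isCompact (isCompact_Icc (a := -r) (b := r)) ?_
    intro s hs
    by_contra hns
    apply hs
    rw [Set.mem_Icc, not_and_or, not_le, not_le] at hns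
    rcases hns with hs' | hs'
    · refine (intervalIntegral.integral_congr (g := fun _ => (0 : ℝ)) fun t ht => ?_).trans (by simp)
      rw [Set.uIcc_of_ge hs'.le] at ht
      exact hzero t (lt_of_lt_of_le hRr (by rw [abs_of_neg (by linarith [ht.2])]; linarith [ht.2]))
    · rw [← h]
      refine intervalIntegral.integral_eq_integral_of_support_subset fun t ht => ?_
      have : |t| ≤ R := by
        by_contra! hlt
        exact ht (hzero t hlt)
      have := abs_le.1 this
      exact ⟨by linarith, by linarith⟩

namespace Concentrates

variable {y : ℝ → Vec4} {g : ℝ → ℝ} {S : ℕ → Vec4 → Mat4}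

lemma integrable (hS : Concentrates y g S) (n : ℕ) (a b : Fin 4) {q : Vec4 → ℝ}
    (hq : Continuous q) (hqc : HasCompactSupport q) : Integrable fun p => S n p a b * q p :=
  ((hS.smooth n a b).continuous.mul hq).integrable_of_hasCompactSupport hqc.mul_left

lemma integral_mono (hS : Concentrates y g S) (n : ℕ) {q r : Vec4 → ℝ}
    (hq : Continuous q) (hqc : HasCompactSupport q) (hr : Continuous r)
    (hrc : HasCompactSupport r) (h : ∀ p, q p ≤ r p) :
    ∫ p, S n p 0 0 * q p ≤ ∫ p, S n p 0 0 * r p :=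
  MeasureTheory.integral_mono (hS.integrable n 0 0 hq hqc) (hS.integrable n 0 0 hr hrc) fun p =>
    mul_le_mul_of_nonneg_left (h p) (hS.dec n p).zero_zero_nonneg

lemma integral_nonneg (hS : Concentrates y g S) (n : ℕ) {q : Vec4 → ℝ} (h : ∀ p, 0 ≤ q p) :
    0 ≤ ∫ p, S n p 0 0 * q p :=
  MeasureTheory.integral_nonneg fun p => mul_nonneg (hS.dec n p).zero_zero_nonneg (h p)

lemma abs_integral_le (hS : Concentrates y g S) (n : ℕ) (a b : Fin 4) {q : Vec4 → ℝ}
    (hq : Continuous q) (hqc : HasCompactSupport q) :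
    |∫ p, S n p a b * q p| ≤ ∫ p, S n p 0 0 * |q p| := by
  refine (abs_integral_le_integral_abs).trans ?_
  refine MeasureTheory.integral_mono (hS.integrable n a b hq hqc).abs
    (hS.integrable n 0 0 hq.abs (hasCompactSupport_abs hqc)) fun p => ?_
  simp only [abs_mul]
  exact mul_le_mul_of_nonneg_right ((hS.dec n p).abs_apply_le a b) (abs_nonneg _)

lemma tendsto_zero_of_abs (hS : Concentrates y g S) (a b : Fin 4) {q : Vec4 → ℝ}
    (hq : Continuous q) (hqc : HasCompactSupport q)
    (h : Tendsto (fun n => ∫ p, S n p 0 0 * |q p|) atTop (𝓝 0)) :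
    Tendsto (fun n => ∫ p, S n p a b * q p) atTop (𝓝 0) :=
  squeeze_zero_norm (fun n => hS.abs_integral_le n a b hq hqc) h

lemma integral_offCurve_le (hS : Concentrates y g S) {n : ℕ} (hn : 0 < n) :
    ∫ p, S n p 0 0 * offCurve y n p ≤ 1 / n := by
  rw [le_div_iff₀ (by exact_mod_cast hn), mul_comm]
  exact hS.integral_off n

/-- Away from the curve the fields tend to zero. -/
lemma tendsto_zero_of_off (hS : Concentrates y g S) (hy : ContDiff ℝ (⊤ : ℕ∞) y) (a b : Fin 4)
    {q : Vec4 → ℝ} (hq : Continuous q) (hqc : HasCompactSupport q) {δ : ℝ} (hδ : 0 < δ)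
    (h : ∀ p, tubeDist y p < δ → q p = 0) :
    Tendsto (fun n => ∫ p, S n p a b * q p) atTop (𝓝 0) := by
  refine hS.tendsto_zero_of_abs a b hq hqc ?_
  obtain ⟨R, hR⟩ := exists_bound_on_support hqc
  obtain ⟨M, hM0, hM⟩ := exists_abs_le hq hqc
  have hlim : Tendsto (fun n : ℕ => M * (1 / (n : ℝ))) atTop (𝓝 0) := by
    simpa using tendsto_one_div_atTop_nhds_zero_nat.const_mul M
  refine squeeze_zero' (.of_forall fun n => hS.integral_nonneg n fun p => abs_nonneg _) ?_ hlim
  filter_upwards [eventually_gt_atTop 0,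
    tendsto_natCast_atTop_atTop.eventually_ge_atTop R,
    tendsto_natCast_atTop_atTop.eventually_ge_atTop (2 / δ)] with n hn hnR hnδ
  calc ∫ p, S n p 0 0 * |q p| ≤ ∫ p, S n p 0 0 * (M * offCurve y n p) := by
        refine hS.integral_mono n hq.abs (hasCompactSupport_abs hqc)
          (continuous_const.mul (contDiff_offCurve hy n).continuous)
          (hasCompactSupport_offCurve n).mul_left fun p => ?_
        by_cases hp : q p = 0
        · rw [hp, abs_zero]
          exact mul_nonneg hM0 (offCurve_nonneg n p)
        · have hd : δ ≤ tubeDist y p := le_of_not_gt fun hlt => hp (h p hlt)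
          rw [offCurve_eq_one ((hR p hp).trans hnR), mul_one]
          · exact hM p
          · rw [div_le_iff₀ hδ] at hnδ
            exact hnδ.trans (mul_le_mul_of_nonneg_left hd n.cast_nonneg)
    _ = M * ∫ p, S n p 0 0 * offCurve y n p := by
        rw [← integral_const_mul]
        congr 1
        ext p
        ring
    _ ≤ M * (1 / n) := mul_le_mul_of_nonneg_left (hS.integral_offCurve_le hn) hM0

/-- Conservation: the flux of a component of the field through a tube around the curve is
asymptotically constant in time. -/
lemma tendsto_tubeFun_deriv (hS : Concentrates y g S) (hy : ContDiff ℝ (⊤ : ℕ∞) y) (b : Fin 4)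
    {G : ℝ → ℝ} (hG : ContDiff ℝ (⊤ : ℕ∞) G) (hGc : HasCompactSupport G) :
    Tendsto (fun n => ∫ p, S n p 0 b * tubeFun y (deriv G) p) atTop (𝓝 0) := by
  have hG' : ContDiff ℝ (⊤ : ℕ∞) (deriv G) := (contDiff_infty_iff_deriv.1 hG).2
  have hcut := contDiff_tubeCutoff hy
  have hv := contDiff_tubeFun hy hG
  have hvc := hasCompactSupport_tubeFun hy.continuous hGc
  have hw := contDiff_tubeFun hy hG'
  have hwc := hasCompactSupport_tubeFun hy.continuous hGc.deriv
  set r : Fin 4 → Vec4 → ℝ := fun a p => G (p 0) * pd a (tubeCutoff y) p with hr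
  have hpd : ∀ a p, pd a (tubeFun y G) p
      = r a p + if a = 0 then tubeFun y (deriv G) p else 0 := by
    intro a p
    have hGd : DifferentiableAt ℝ G (p 0) := hG.contDiffAt.differentiableAt (by simp)
    unfold tubeFun
    rw [pd_mul (f := fun q : Vec4 => G (q 0)) (hGd.comp p (differentiableAt_apply 0 p))
      (hcut.contDiffAt.differentiableAt (by simp)), pd_comp_time hGd]
    simp only [hr]
    split_ifs <;> ring
  have hrcont : ∀ a, Continuous (r a) := fun a =>
    (hG.continuous.comp (continuous_apply 0)).mul (contDiff_pd hcut a).continuous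
  have hrc : ∀ a, HasCompactSupport (r a) := by
    intro a
    have : r a = fun p => pd a (tubeFun y G) p + -(if a = 0 then tubeFun y (deriv G) p else 0) := by
      funext p
      rw [hpd]; ring
    rw [this]
    refine (hasCompactSupport_pd hvc a).add ?_
    by_cases ha : a = 0
    · simp only [ha, if_true]
      exact hwc.comp_left (g := fun t : ℝ => -t) neg_zero
    · simp only [ha, if_false, neg_zero]
      exact HasCompactSupport.zero
  have hroff : ∀ a p, tubeDist y p < 1 → r a p = 0 := by
    intro a p hp
    have hev : tubeCutoff y =ᶠ[𝓝 p] fun _ => 1 := by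
      filter_upwards [(contDiff_tubeDist hy).continuous.continuousAt.eventually_lt
        continuousAt_const hp] with q hq
      exact tubeCutoff_eq_one hq.le
    simp [hr, pd, hev.fderiv_eq]
  have hlim : Tendsto (fun n => -∑ a, ∫ p, S n p a b * r a p) atTop (𝓝 0) := by
    simpa using (tendsto_finsetSum Finset.univ fun a _ =>
      hS.tendsto_zero_of_off hy a b (hrcont a) (hrc a) one_pos (hroff a)).neg
  refine hlim.congr fun n => ?_
  have hdiv := DivFree.integral_eq_zero (hS.smooth n) (hS.divFree n) hv hvc b
  have hsplit : ∀ a, ∫ p, S n p a b * pd a (tubeFun y G) p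
      = (∫ p, S n p a b * r a p)
        + if a = 0 then ∫ p, S n p 0 b * tubeFun y (deriv G) p else 0 := by
    intro a
    simp only [hpd, mul_add]
    by_cases ha : a = 0
    · subst ha
      simp only [if_true]
      exact integral_add (hS.integrable n _ b (hrcont _) (hrc _))
        (hS.integrable n _ b hw.continuous hwc)
    · simp [ha]
  simp only [hsplit, Finset.sum_add_distrib, Finset.sum_ite_eq', Finset.mem_univ, if_true] at hdiv
  linarith

/-- The energy in a tube around the curve is asymptotically uniform in time. -/
lemma tendsto_tubeFun (hS : Concentrates y g S) (hy : ContDiff ℝ (⊤ : ℕ∞) y)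
    (hg : ContDiff ℝ (⊤ : ℕ∞) g) (hgc : HasCompactSupport g) (hg1 : ∫ s, g s = 1)
    {f : ℝ → ℝ} (hf : ContDiff ℝ (⊤ : ℕ∞) f) (hfc : HasCompactSupport f) :
    Tendsto (fun n => ∫ p, S n p 0 0 * tubeFun y f p) atTop (𝓝 (∫ s, f s)) := by
  set c := ∫ s, f s with hc
  have hcg : HasCompactSupport fun s => c * g s := hgc.mul_left
  have hcg' : HasCompactSupport fun s => f s - c * g s := hfc.sub hcg
  obtain ⟨G, hG, hGc, hGd⟩ := exists_primitive (g := fun s => f s - c * g s)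
    (hf.sub (contDiff_const.mul hg)) hcg' (by
      have hcgi : Integrable fun s => c * g s :=
        (continuous_const.mul hg.continuous).integrable_of_hasCompactSupport hcg
      rw [integral_sub (hf.continuous.integrable_of_hasCompactSupport hfc) hcgi,
        integral_const_mul, hg1, mul_one, sub_self])
  have h := (hS.tendsto_tubeFun_deriv hy 0 hG hGc).add_const c
  rw [zero_add] at h
  refine h.congr fun n => ?_
  have hfi := hS.integrable n 0 0 (contDiff_tubeFun hy hf).continuous
    (hasCompactSupport_tubeFun hy.continuous hfc)
  have hgi := hS.integrable n 0 0 (contDiff_tubeFun hy hg).continuous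
    (hasCompactSupport_tubeFun hy.continuous hgc)
  have : ∀ p, S n p 0 0 * tubeFun y (deriv G) p
      = S n p 0 0 * tubeFun y f p - c * (S n p 0 0 * tubeFun y g p) := by
    intro p
    rw [hGd]
    simp only [tubeFun]
    ring
  simp only [this]
  rw [integral_sub hfi (hgi.const_mul c), integral_const_mul, hS.integral_tube n]
  ring

/-- The limit has order zero: functions vanishing on the curve are negligible. -/
lemma tendsto_zero_of_curve (hS : Concentrates y g S) (hy : ContDiff ℝ (⊤ : ℕ∞) y)
    (hg : ContDiff ℝ (⊤ : ℕ∞) g) (hgc : HasCompactSupport g) (hg1 : ∫ s, g s = 1) (a b : Fin 4)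
    {q : Vec4 → ℝ} (hq : Continuous q) (hqc : HasCompactSupport q) (h : ∀ s, q (y s) = 0) :
    Tendsto (fun n => ∫ p, S n p a b * q p) atTop (𝓝 0) := by
  refine hS.tendsto_zero_of_abs a b hq hqc ?_
  obtain ⟨R, hR⟩ := exists_bound_on_support hqc
  obtain ⟨M, hM0, hM⟩ := exists_abs_le hq hqc
  let β : ContDiffBump (0 : ℝ) := ⟨|R| + 1, |R| + 2, by positivity, by linarith⟩
  have hβ : ContDiff ℝ (⊤ : ℕ∞) β := β.contDiff
  have hβ1 : ∀ p, q p ≠ 0 → β (p 0) = 1 := by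
    intro p hp
    refine β.one_of_mem_closedBall ?_
    rw [mem_closedBall_zero_iff, Real.norm_eq_abs]
    have h1 : p 0 ^ 2 ≤ ∑ i, p i ^ 2 :=
      Finset.single_le_sum (f := fun i => p i ^ 2) (fun _ _ => sq_nonneg _) (Finset.mem_univ 0)
    have h2 := hR p hp
    have h3 := le_abs_self R
    have h4 := abs_nonneg R
    exact abs_le_of_sq_le_sq (by nlinarith) (by positivity)
  have htube := hS.tendsto_tubeFun hy hg hgc hg1 hβ β.hasCompactSupport
  set B := |∫ s, β s| + 1 with hB
  have hB0 : 0 < B := by positivity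
  have htubec := (contDiff_tubeFun hy hβ).continuous
  have htubes := hasCompactSupport_tubeFun hy.continuous β.hasCompactSupport
  rw [Metric.tendsto_atTop]
  suffices hev : ∀ e > 0, ∀ᶠ n in atTop, ∫ p, S n p 0 0 * |q p| < e by
    intro e he
    obtain ⟨N, hN⟩ := eventually_atTop.1 (hev e he)
    refine ⟨N, fun n hn => ?_⟩
    rw [Real.dist_0_eq_abs, abs_of_nonneg (hS.integral_nonneg n fun p => abs_nonneg _)]
    exact hN n hn
  intro e he
  set ε := e / (2 * B) with hε
  have hε0 : 0 < ε := by positivity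
  obtain ⟨δ, hδ0, hδ⟩ : ∃ δ > 0, ∀ p, ε ≤ |q p| → δ ≤ tubeDist y p := by
    have hK : IsCompact {p | ε ≤ |q p|} := by
      refine hqc.isCompact.of_isClosed_subset (isClosed_le continuous_const hq.abs) fun p hp => ?_
      refine subset_tsupport _ fun h0 => ?_
      rw [Set.mem_ofPred_eq, h0, abs_zero] at hp
      linarith
    rcases Set.eq_empty_or_nonempty {p | ε ≤ |q p|} with hem | hne
    · exact ⟨1, one_pos, fun p hp => (Set.eq_empty_iff_forall_notMem.1 hem p hp).elim⟩
    · obtain ⟨p₀, hp₀, hmin⟩ := hK.exists_isMinOn hne (contDiff_tubeDist hy).continuous.continuousOn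
      refine ⟨tubeDist y p₀, (tubeDist_nonneg p₀).lt_of_ne' fun h0 => ?_, fun p hp => hmin hp⟩
      rw [tubeDist_eq_zero_iff] at h0
      rw [Set.mem_ofPred_eq, h0, h, abs_zero] at hp₀
      linarith
  have hlim : Tendsto (fun n : ℕ => (M + ε) * (1 / (n : ℝ))) atTop (𝓝 0) := by
    simpa using tendsto_one_div_atTop_nhds_zero_nat.const_mul (M + ε)
  filter_upwards [eventually_gt_atTop 0,
    tendsto_natCast_atTop_atTop.eventually_ge_atTop R,
    tendsto_natCast_atTop_atTop.eventually_ge_atTop (2 : ℝ),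
    tendsto_natCast_atTop_atTop.eventually_ge_atTop (2 / δ),
    htube.eventually_lt_const (show ∫ s, β s < B by
      have := le_abs_self (∫ s, β s); linarith),
    hlim.eventually_lt_const (half_pos he)] with n hn hnR hn2 hnδ hnB hne
  have hoffc := (contDiff_offCurve hy n).continuous
  have hoffs := hasCompactSupport_offCurve (y := y) n
  have hle : ∀ p, |q p| ≤ ε * tubeFun y β p + (M + ε) * offCurve y n p := by
    intro p
    have ht : 0 ≤ tubeFun y β p := mul_nonneg β.nonneg (tubeCutoff_nonneg p)
    have ho := offCurve_nonneg (y := y) n p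
    by_cases hp : q p = 0
    · rw [hp, abs_zero]
      positivity
    by_cases hd : 2 ≤ n * tubeDist y p
    · rw [offCurve_eq_one ((hR p hp).trans hnR) hd, mul_one]
      nlinarith [hM p]
    · have hlt : |q p| < ε := by
        by_contra! hge
        apply hd
        rw [div_le_iff₀ hδ0] at hnδ
        exact hnδ.trans (mul_le_mul_of_nonneg_left (hδ p hge) n.cast_nonneg)
      have h1 : tubeFun y β p = 1 := by
        rw [tubeFun, hβ1 p hp, one_mul]
        refine tubeCutoff_eq_one ?_
        nlinarith [tubeDist_nonneg (y := y) p]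
      rw [h1]
      have : 0 ≤ (M + ε) * offCurve y n p := by positivity
      linarith
  calc ∫ p, S n p 0 0 * |q p|
      ≤ ∫ p, S n p 0 0 * (ε * tubeFun y β p + (M + ε) * offCurve y n p) :=
        hS.integral_mono n hq.abs (hasCompactSupport_abs hqc)
          ((continuous_const.mul htubec).add (continuous_const.mul hoffc))
          (htubes.mul_left.add hoffs.mul_left) hle
    _ = ε * (∫ p, S n p 0 0 * tubeFun y β p) + (M + ε) * ∫ p, S n p 0 0 * offCurve y n p := by
        rw [← integral_const_mul, ← integral_const_mul, ← integral_add
          ((hS.integrable n 0 0 htubec htubes).const_mul _)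
          ((hS.integrable n 0 0 hoffc hoffs).const_mul _)]
        congr 1
        ext p
        ring
    _ ≤ ε * B + (M + ε) * (1 / n) := by
        gcongr
        exact hS.integral_offCurve_le hn
    _ < e / 2 + e / 2 := by
        have : ε * B = e / 2 := by
          rw [hε]; field_simp
        linarith
    _ = e := add_halves e

/-- The energy density converges to the delta distribution on the curve. -/
lemma tendsto_energy (hS : Concentrates y g S) (hy : ContDiff ℝ (⊤ : ℕ∞) y)
    (h0 : ∀ s, y s 0 = s)
    (hg : ContDiff ℝ (⊤ : ℕ∞) g) (hgc : HasCompactSupport g) (hg1 : ∫ s, g s = 1)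
    {w : Vec4 → ℝ} (hw : ContDiff ℝ (⊤ : ℕ∞) w) (hwc : HasCompactSupport w) :
    Tendsto (fun n => ∫ p, S n p 0 0 * w p) atTop (𝓝 (∫ s, w (y s))) := by
  have hwy : ContDiff ℝ (⊤ : ℕ∞) fun s => w (y s) := hw.comp hy
  have hwyc := hasCompactSupport_comp_curve h0 hwc
  have ht := contDiff_tubeFun hy hwy
  have htc := hasCompactSupport_tubeFun hy.continuous hwyc
  have hdc : HasCompactSupport fun p => w p - tubeFun y (fun s => w (y s)) p := hwc.sub htc
  have h1 := hS.tendsto_zero_of_curve hy hg hgc hg1 0 0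
    (q := fun p => w p - tubeFun y (fun s => w (y s)) p)
    (hw.continuous.sub ht.continuous) hdc (fun s => by
      rw [tubeFun, tubeCutoff_eq_one ((tubeDist_curve h0 s).le.trans zero_le_one), h0, mul_one,
        sub_self])
  have h2 := h1.add (hS.tendsto_tubeFun hy hg hgc hg1 hwy hwyc)
  rw [zero_add] at h2
  refine h2.congr fun n => ?_
  simp only [mul_sub]
  rw [integral_sub (hS.integrable n 0 0 hw.continuous hwc)
    (hS.integrable n 0 0 ht.continuous htc), sub_add_cancel]

/-- Components of the field normal to the curve are negligible. -/
lemma tendsto_normal (hS : Concentrates y g S) (hy : ContDiff ℝ (⊤ : ℕ∞) y)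
    (h0 : ∀ s, y s 0 = s)
    (hg : ContDiff ℝ (⊤ : ℕ∞) g) (hgc : HasCompactSupport g) (hg1 : ∫ s, g s = 1) (i b : Fin 4)
    {w : Vec4 → ℝ} (hw : ContDiff ℝ (⊤ : ℕ∞) w) (hwc : HasCompactSupport w) :
    Tendsto (fun n => (∫ p, S n p i b * w p) - ∫ p, S n p 0 b * (deriv y (p 0) i * w p))
      atTop (𝓝 0) := by
  have hy' : ContDiff ℝ (⊤ : ℕ∞) (deriv y) := (contDiff_infty_iff_deriv.1 hy).2
  have hyi : ContDiff ℝ (⊤ : ℕ∞) fun p : Vec4 => y (p 0) i :=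
    (contDiff_pi.1 hy i).comp (contDiff_apply ℝ ℝ (0 : Fin 4))
  have hyi' : ContDiff ℝ (⊤ : ℕ∞) fun p : Vec4 => deriv y (p 0) i :=
    (contDiff_pi.1 hy' i).comp (contDiff_apply ℝ ℝ (0 : Fin 4))
  set f : Vec4 → ℝ := fun p => p i - y (p 0) i with hf
  have hfs : ContDiff ℝ (⊤ : ℕ∞) f := (contDiff_apply ℝ ℝ i).sub hyi
  have hfy : ∀ s, f (y s) = 0 := fun s => by simp [hf, h0]
  have hrc : ∀ a, Continuous fun p => f p * pd a w p := fun a =>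
    hfs.continuous.mul (contDiff_pd hw a).continuous
  have hrs : ∀ a, HasCompactSupport fun p => f p * pd a w p := fun a =>
    (hasCompactSupport_pd hwc a).mul_left
  have hlim : Tendsto (fun n => -∑ a, ∫ p, S n p a b * (f p * pd a w p)) atTop (𝓝 0) := by
    simpa using (tendsto_finsetSum Finset.univ fun a _ =>
      hS.tendsto_zero_of_curve hy hg hgc hg1 a b (hrc a) (hrs a)
        (fun s => by rw [hfy, zero_mul])).neg
  refine hlim.congr fun n => ?_
  have hdiv := DivFree.integral_eq_zero (hS.smooth n) (hS.divFree n) (hfs.mul hw) hwc.mul_left b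
  have hwi : ∀ a, Integrable fun p => S n p a b * w p := fun a =>
    hS.integrable n a b hw.continuous hwc
  have hwi' : ∀ a, Integrable fun p => S n p a b * (deriv y (p 0) i * w p) := fun a =>
    hS.integrable n a b (hyi'.continuous.mul hw.continuous) hwc.mul_left
  have hri : ∀ a, Integrable fun p => S n p a b * (f p * pd a w p) := fun a =>
    hS.integrable n a b (hrc a) (hrs a)
  have hsplit : ∀ a, ∫ p, S n p a b * pd a (fun q => f q * w q) p
      = (∫ p, S n p a b * (f p * pd a w p))
        + ((if a = i then ∫ p, S n p a b * w p else 0)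
          - if a = 0 then ∫ p, S n p a b * (deriv y (p 0) i * w p) else 0) := by
    intro a
    have : ∀ p, S n p a b * pd a (fun q => f q * w q) p = S n p a b * (f p * pd a w p)
        + ((if a = i then S n p a b * w p else 0)
          - if a = 0 then S n p a b * (deriv y (p 0) i * w p) else 0) := by
      intro p
      rw [pd_mul (hfs.contDiffAt.differentiableAt (by simp))
        (hw.contDiffAt.differentiableAt (by simp)), pd_coord_sub hy]
      split_ifs <;> ring
    simp only [this]
    split_ifs
    · have hsub : Integrable fun p => S n p a b * w p - S n p a b * (deriv y (p 0) i * w p) :=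
        (hwi a).sub (hwi' a)
      rw [integral_add (hri a) hsub, integral_sub (hwi a) (hwi' a)]
    · simp only [sub_zero]
      rw [integral_add (hri a) (hwi a)]
    · simp only [zero_sub, ← sub_eq_add_neg]
      rw [integral_sub (hri a) (hwi' a)]
    · simp
  simp only [hsplit, Finset.sum_add_distrib, Finset.sum_sub_distrib, Finset.sum_ite_eq',
    Finset.mem_univ, if_true] at hdiv
  linarith

/-- Momentum is carried along the curve. -/
lemma tendsto_momentum (hS : Concentrates y g S) (hy : ContDiff ℝ (⊤ : ℕ∞) y)
    (h0 : ∀ s, y s 0 = s)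
    (hg : ContDiff ℝ (⊤ : ℕ∞) g) (hgc : HasCompactSupport g) (hg1 : ∫ s, g s = 1) (j : Fin 4)
    {w : Vec4 → ℝ} (hw : ContDiff ℝ (⊤ : ℕ∞) w) (hwc : HasCompactSupport w) :
    Tendsto (fun n => ∫ p, S n p 0 j * w p) atTop (𝓝 (∫ s, deriv y s j * w (y s))) := by
  have hy' : ContDiff ℝ (⊤ : ℕ∞) (deriv y) := (contDiff_infty_iff_deriv.1 hy).2
  have hyj' : ContDiff ℝ (⊤ : ℕ∞) fun p : Vec4 => deriv y (p 0) j :=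
    (contDiff_pi.1 hy' j).comp (contDiff_apply ℝ ℝ (0 : Fin 4))
  have h := (hS.tendsto_normal hy h0 hg hgc hg1 j 0 hw hwc).add
    (hS.tendsto_energy hy h0 hg hgc hg1 (hyj'.mul hw) hwc.mul_left)
  simp only [sub_add_cancel, zero_add, h0] at h
  refine h.congr fun n => ?_
  congr 1
  ext p
  rw [show S n p j 0 = S n p 0 j from congrFun (congrFun (hS.sym n p) 0) j]

/-- The components of the field converge to those of the delta distribution on the curve. -/
lemma tendsto_component (hS : Concentrates y g S) (hy : ContDiff ℝ (⊤ : ℕ∞) y)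
    (h0 : ∀ s, y s 0 = s)
    (hg : ContDiff ℝ (⊤ : ℕ∞) g) (hgc : HasCompactSupport g) (hg1 : ∫ s, g s = 1) (i j : Fin 4)
    {w : Vec4 → ℝ} (hw : ContDiff ℝ (⊤ : ℕ∞) w) (hwc : HasCompactSupport w) :
    Tendsto (fun n => ∫ p, S n p i j * w p) atTop
      (𝓝 (∫ s, deriv y s i * deriv y s j * w (y s))) := by
  have hy' : ContDiff ℝ (⊤ : ℕ∞) (deriv y) := (contDiff_infty_iff_deriv.1 hy).2
  have hyi' : ContDiff ℝ (⊤ : ℕ∞) fun p : Vec4 => deriv y (p 0) i :=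
    (contDiff_pi.1 hy' i).comp (contDiff_apply ℝ ℝ (0 : Fin 4))
  have h := (hS.tendsto_normal hy h0 hg hgc hg1 i j hw hwc).add
    (hS.tendsto_momentum hy h0 hg hgc hg1 j (hyi'.mul hw) hwc.mul_left)
  simp only [sub_add_cancel, zero_add, h0] at h
  convert h using 4
  ring

/-- Conservation forces the curve to be a straight line. -/
lemma deriv_eq_const (hS : Concentrates y g S) (hy : ContDiff ℝ (⊤ : ℕ∞) y)
    (h0 : ∀ s, y s 0 = s)
    (hg : ContDiff ℝ (⊤ : ℕ∞) g) (hgc : HasCompactSupport g) (hg1 : ∫ s, g s = 1) (s : ℝ) :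
    deriv y s = deriv y 0 := by
  have hy' : ContDiff ℝ (⊤ : ℕ∞) (deriv y) := (contDiff_infty_iff_deriv.1 hy).2
  funext i
  have hyi : ContDiff ℝ (⊤ : ℕ∞) fun s => deriv y s i := contDiff_pi.1 hy' i
  obtain ⟨hd, hyi'⟩ := contDiff_infty_iff_deriv.1 hyi
  refine is_const_of_deriv_eq_zero hd (fun s => ?_) s 0
  have hae : ∀ᵐ s, deriv (fun s => deriv y s i) s = 0 := by
    refine ae_eq_zero_of_integral_contDiff_smul_eq_zero hyi'.continuous.locallyIntegrable ?_
    intro G hG hGc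
    have hG' : ContDiff ℝ (⊤ : ℕ∞) (deriv G) := (contDiff_infty_iff_deriv.1 hG).2
    have h1 := hS.tendsto_tubeFun_deriv hy i hG hGc
    have h2 := hS.tendsto_momentum hy h0 hg hgc hg1 i (contDiff_tubeFun hy hG')
      (hasCompactSupport_tubeFun hy.continuous hGc.deriv)
    have h3 := tendsto_nhds_unique h1 h2
    have h4 : ∀ s, tubeFun y (deriv G) (y s) = deriv G s := fun s => by
      rw [tubeFun, tubeCutoff_eq_one ((tubeDist_curve h0 s).le.trans zero_le_one), h0, mul_one]
    simp only [h4] at h3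
    have h5 := integral_mul_deriv_eq_deriv_mul_of_integrable (u := fun s => deriv y s i) (v := G)
      (u' := deriv fun s => deriv y s i) (v' := deriv G)
      (fun s _ => (hd s).hasDerivAt)
      (fun s _ => (hG.contDiffAt.differentiableAt (by simp)).hasDerivAt)
      ((hyi.continuous.mul hG'.continuous).integrable_of_hasCompactSupport hGc.deriv.mul_left)
      ((hyi'.continuous.mul hG.continuous).integrable_of_hasCompactSupport hGc.mul_left)
      ((hyi.continuous.mul hG.continuous).integrable_of_hasCompactSupport hGc.mul_left)
    rw [← h3] at h5
    simp only [smul_eq_mul, mul_comm (G _)]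
    linarith
  exact congrFun ((Continuous.ae_eq_iff_eq volume hyi'.continuous continuous_const).1 hae) s

end Concentrates

/-! ### Extracting a concentrating sequence from a tracking collection -/

lemma minner_smul_timeMat (T : Mat4) (r : ℝ) : minner T (r • timeMat) = T 0 0 * r := by
  simp [minner, timeMat_apply, Fin.sum_univ_four]

lemma SmoothMatField.const_smul {T : Vec4 → Mat4} (hT : SmoothMatField T) (c : ℝ) :
    SmoothMatField fun p => c • T p := fun a b => contDiff_const.mul (hT a b)

lemma DivFree.const_smul {T : Vec4 → Mat4} (hT : SmoothMatField T) (h : DivFree T) (c : ℝ) :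
    DivFree fun p => c • T p := by
  intro p b
  have : ∀ a, pd a (fun q => (c • T q) a b) p = c * pd a (fun q => T q a b) p := by
    intro a
    simp only [Matrix.smul_apply, smul_eq_mul]
    rw [pd_mul (differentiableAt_const c) ((hT a b).contDiffAt.differentiableAt (by simp))]
    simp [pd]
  simp only [this, ← Finset.mul_sum, h p b, mul_zero]

lemma DEC.smul {T : Mat4} (hT : DEC T) {c : ℝ} (hc : 0 ≤ c) : DEC (c • T) := by
  intro ξ ζ hξ hζ
  have := mul_nonneg hc (hT ξ ζ hξ hζ)
  simp only [Finset.mul_sum] at this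
  refine this.trans_eq (Finset.sum_congr rfl fun i _ => Finset.sum_congr rfl fun j _ => ?_)
  simp only [Matrix.smul_apply, smul_eq_mul]
  ring

lemma Tracks.exists_concentrates {C : Set (Vec4 → Mat4)} {γ : ℝ → Vec4} (htr : Tracks C γ)
    (hC : ∀ T ∈ C, SmoothMatField T ∧ SymValued T ∧ (∀ p, DEC (T p)) ∧ DivFree T)
    {y : ℝ → Vec4} (hy : ContDiff ℝ (⊤ : ℕ∞) y) (hγy : ∀ t, γ t = y (γ t 0))
    (hγ0 : ∃ t, γ t 0 = 0)
    {g : ℝ → ℝ} (hg : ContDiff ℝ (⊤ : ℕ∞) g) (hgc : HasCompactSupport g)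
    (hgnn : ∀ s, 0 ≤ g s) (hg0 : 0 < g 0) :
    ∃ (c : ℕ → ℝ) (Tn : ℕ → Vec4 → Mat4), (∀ n, 0 < c n) ∧ (∀ n, Tn n ∈ C) ∧
      Concentrates y g fun n p => c n • Tn n p := by
  have ht := contDiff_tubeFun hy hg
  have htc := hasCompactSupport_tubeFun hy.continuous hgc
  have htn : ∀ p, 0 ≤ tubeFun y g p := fun p => mul_nonneg (hgnn _) (tubeCutoff_nonneg p)
  have hd0 : ∀ t, tubeDist y (γ t) = 0 := fun t => tubeDist_eq_zero_iff.2 (hγy t)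
  have hmain : ∀ n : ℕ, ∃ T ∈ C,
      n * (∫ p, T p 0 0 * offCurve y n p) < ∫ p, T p 0 0 * tubeFun y g p := by
    intro n
    have ho := contDiff_offCurve hy n
    have hoc := hasCompactSupport_offCurve (y := y) n
    set r : Vec4 → ℝ := fun p => tubeFun y g p - n * offCurve y n p with hr
    have hrs : ContDiff ℝ (⊤ : ℕ∞) r := ht.sub (contDiff_const.mul ho)
    have hmoc : HasCompactSupport fun p => n * offCurve y n p := hoc.mul_left
    have hrc : HasCompactSupport r := htc.sub hmoc
    have hroff : ∀ p, n * tubeDist y p < 1 → r p = tubeFun y g p := fun p hp => by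
      simp only [hr, offCurve_eq_zero hp.le, mul_zero, sub_zero]
    obtain ⟨T, hT, hpos⟩ := htr (fun p => r p • timeMat) (fun a b => hrs.mul contDiff_const)
      (hrc.comp_left (g := fun t : ℝ => t • timeMat) (zero_smul _ _))
      (fun p => by rw [transpose_smul, timeMat_transpose])
      ⟨{p | n * tubeDist y p < 1},
        isOpen_lt (continuous_const.mul (contDiff_tubeDist hy).continuous) continuous_const,
        by
          rintro _ ⟨t, rfl⟩
          simp [hd0],
        fun p hp => coneD_smul timeMat_mem_coneD (by rw [hroff p hp]; exact htn p)⟩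
      (by
        obtain ⟨t, ht0⟩ := hγ0
        refine ⟨t, generic_smul_timeMat ?_⟩
        rw [hroff _ (by simp [hd0]), tubeFun, tubeCutoff_eq_one (by simp [hd0]), ht0, mul_one]
        exact hg0)
    refine ⟨T, hT, ?_⟩
    have hT00 := ((hC T hT).1 0 0).continuous
    have h1 : Integrable fun p => T p 0 0 * tubeFun y g p :=
      (hT00.mul ht.continuous).integrable_of_hasCompactSupport htc.mul_left
    have h2 : Integrable fun p => T p 0 0 * offCurve y n p :=
      (hT00.mul ho.continuous).integrable_of_hasCompactSupport hoc.mul_left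
    have h3 : ∀ p, minner (T p) (r p • timeMat)
        = T p 0 0 * tubeFun y g p - n * (T p 0 0 * offCurve y n p) := by
      intro p
      rw [minner_smul_timeMat]
      simp only [hr]
      ring
    simp only [h3] at hpos
    rw [integral_sub h1 (h2.const_mul _), integral_const_mul] at hpos
    linarith
  choose Tn hTn hlt using hmain
  have hpos : ∀ n, 0 < ∫ p, Tn n p 0 0 * tubeFun y g p := by
    intro n
    refine lt_of_le_of_lt (mul_nonneg n.cast_nonneg (integral_nonneg fun p => ?_)) (hlt n)
    exact mul_nonneg ((hC _ (hTn n)).2.2.1 p).zero_zero_nonneg (offCurve_nonneg n p)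
  refine ⟨fun n => (∫ p, Tn n p 0 0 * tubeFun y g p)⁻¹, Tn, fun n => inv_pos.2 (hpos n), hTn, ?_⟩
  refine ⟨fun n => (hC _ (hTn n)).1.const_smul _, fun n p => ?_,
    fun n p => ((hC _ (hTn n)).2.2.1 p).smul (inv_pos.2 (hpos n)).le,
    fun n => (hC _ (hTn n)).2.2.2.const_smul (hC _ (hTn n)).1 _, fun n => ?_, fun n => ?_⟩
  · rw [transpose_smul, (hC _ (hTn n)).2.1 p]
  · simp only [Matrix.smul_apply, smul_eq_mul, mul_assoc]
    rw [integral_const_mul, inv_mul_cancel₀ (hpos n).ne']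
  · simp only [Matrix.smul_apply, smul_eq_mul, mul_assoc]
    rw [integral_const_mul, mul_left_comm, inv_mul_le_iff₀ (hpos n), mul_one]
    exact (hlt n).le

/-! ### Parametrization by time -/

/-- A unit timelike curve can be parametrized by its time coordinate. -/
lemma exists_time_parametrization {γ : ℝ → Vec4} (hγ : ContDiff ℝ (⊤ : ℕ∞) γ)
    (hunit : ∀ t : ℝ, mink (deriv γ t) (deriv γ t) = 1)
    (htl : ∀ t : ℝ, FutureTimelike (deriv γ t)) :
    ∃ y : ℝ → Vec4, ContDiff ℝ (⊤ : ℕ∞) y ∧ (∀ s, y s 0 = s) ∧ (∀ t, γ t = y (γ t 0)) ∧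
      ∃ t, γ t 0 = 0 := by
  have hd : ∀ t, HasDerivAt (fun t => γ t 0) (deriv γ t 0) t := fun t =>
    hasDerivAt_pi.1 (hγ.contDiffAt.differentiableAt (by simp)).hasDerivAt 0
  have hsm : ContDiff ℝ (⊤ : ℕ∞) fun t => γ t 0 := contDiff_pi.1 hγ 0
  have hge : ∀ t, 1 ≤ deriv γ t 0 := by
    intro t
    have h1 := hunit t
    have h2 := (htl t).2
    rw [mink] at h1
    nlinarith [sq_nonneg (deriv γ t 1), sq_nonneg (deriv γ t 2), sq_nonneg (deriv γ t 3)]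
  have hmono : StrictMono fun t => γ t 0 :=
    strictMono_of_deriv_pos fun t => by
      rw [(hd t).deriv]; linarith [hge t]
  have hmono' : Monotone fun t => γ t 0 - t :=
    monotone_of_deriv_nonneg (fun t => ((hd t).sub (hasDerivAt_id t)).differentiableAt) fun t => by
      rw [((hd t).fun_sub (hasDerivAt_id' t)).deriv]; linarith [hge t]
  have htop : Tendsto (fun t => γ t 0) atTop atTop := by
    refine tendsto_atTop_mono' _ ?_ (tendsto_atTop_add_const_right _ (γ 0 0) tendsto_id)
    filter_upwards [eventually_ge_atTop 0] with t ht
    have := hmono' ht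
    simp only [id] at this ⊢
    linarith
  have hbot : Tendsto (fun t => γ t 0) atBot atBot := by
    refine tendsto_atBot_mono' _ ?_ (tendsto_atBot_add_const_right _ (γ 0 0) tendsto_id)
    filter_upwards [eventually_le_atBot 0] with t ht
    have := hmono' ht
    simp only [id] at this ⊢
    linarith
  have hsurj := hsm.continuous.surjective htop hbot
  let e := (hmono.orderIsoOfSurjective _ hsurj).toHomeomorph
  have he : ContDiff ℝ (⊤ : ℕ∞) e.symm :=
    e.contDiff_symm_deriv (f' := fun t => deriv γ t 0) (fun t => by linarith [hge t]) hd hsm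
  refine ⟨fun s => γ (e.symm s), hγ.comp he, fun s => e.apply_symm_apply s, fun t => ?_, hsurj 0⟩
  exact congrArg γ (e.symm_apply_apply t).symm

/-- Tracking collections converge to a delta distribution on the curve. -/
theorem tracking_delta_convergence (γ : ℝ → Vec4) (hγ : ContDiff ℝ (⊤ : ℕ∞) γ)
    (hunit : ∀ t : ℝ, mink (deriv γ t) (deriv γ t) = 1)
    (htl : ∀ t : ℝ, FutureTimelike (deriv γ t))
    (C : Set (Vec4 → Mat4))
    (hC : ∀ T ∈ C, SmoothMatField T ∧ SymValued T ∧ (∀ p, DEC (T p)) ∧ DivFree T)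
    (htr : Tracks C γ) :
    ∃ (c : ℕ → ℝ) (Tn : ℕ → Vec4 → Mat4),
      (∀ n, 0 < c n) ∧ (∀ n, Tn n ∈ C) ∧
      ∀ x : Vec4 → Mat4, SmoothMatField x → HasCompactSupport x → SymValued x →
        Tendsto (fun n => c n * ∫ p, minner (Tn n p) (x p)) atTop
          (𝓝 (∫ t : ℝ, ∑ i, ∑ j, deriv γ t i * deriv γ t j * x (γ t) i j)) := by
  obtain ⟨y, hy, h0, hγy, hγ0⟩ := exists_time_parametrization hγ hunit htl
  let β : ContDiffBump (0 : ℝ) := ⟨1, 2, one_pos, one_lt_two⟩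
  set g : ℝ → ℝ := β.normed volume with hgdef
  have hg : ContDiff ℝ (⊤ : ℕ∞) g := β.contDiff_normed
  have hgc : HasCompactSupport g := β.hasCompactSupport_normed
  have hg1 : ∫ s, g s = 1 := β.integral_normed
  have hg0 : 0 < g 0 := div_pos
    (β.pos_of_mem_ball (Metric.mem_ball_self two_pos)) β.integral_pos
  obtain ⟨c, Tn, hc, hTn, hS⟩ :=
    htr.exists_concentrates hC hy hγy hγ0 hg hgc β.nonneg_normed hg0
  set v := deriv y 0 with hv
  have hyv : ∀ s, deriv y s = v := hS.deriv_eq_const hy h0 hg hgc hg1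
  set k := deriv γ 0 0 with hk
  have hk0 : 0 < k := (htl 0).2
  have hd : ∀ t, HasDerivAt (fun t => γ t 0) (deriv γ t 0) t := fun t =>
    hasDerivAt_pi.1 (hγ.contDiffAt.differentiableAt (by simp)).hasDerivAt 0
  have hγ' : ∀ t, deriv γ t = deriv γ t 0 • v := by
    intro t
    have h1 := (hy.contDiffAt.differentiableAt (by simp)).hasDerivAt.scomp t (hd t)
    rw [hyv] at h1
    have h2 : γ = y ∘ fun t => γ t 0 := funext hγy
    rw [← h2] at h1
    exact h1.deriv
  have hkt : ∀ t, deriv γ t 0 = k := by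
    have hsq : ∀ t, deriv γ t 0 ^ 2 * mink v v = 1 := by
      intro t
      have h1 := hunit t
      rw [hγ' t] at h1
      rw [← h1]
      simp only [mink, Pi.smul_apply, smul_eq_mul]
      have hv0 : v 0 = 1 := by
        have h2 := congrFun (hγ' t) 0
        simp only [Pi.smul_apply, smul_eq_mul] at h2
        have h3 := (htl t).2
        exact mul_left_cancel₀ h3.ne' (by linarith)
      rw [hv0]
      ring
    intro t
    have hne : mink v v ≠ 0 := fun h => by simpa [h] using hsq 0
    have h1 : deriv γ t 0 ^ 2 = k ^ 2 := mul_right_cancel₀ hne ((hsq t).trans (hsq 0).symm)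
    exact (sq_eq_sq₀ (htl t).2.le hk0.le).1 h1
  have hγt : ∀ t, γ t 0 = k * t + γ 0 0 := by
    intro t
    have hdiff : ∀ t, HasDerivAt (fun t => γ t 0 - k * t) 0 t := fun t => by
      have := (hd t).fun_sub ((hasDerivAt_id' t).const_mul k)
      rwa [hkt, mul_one, sub_self] at this
    have := is_const_of_deriv_eq_zero (fun t => (hdiff t).differentiableAt)
      (fun t => (hdiff t).deriv) t 0
    simp only [mul_zero, sub_zero] at this
    linarith
  refine ⟨fun n => k * c n, Tn, fun n => mul_pos hk0 (hc n), hTn, fun x hx hxc _ => ?_⟩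
  have hxij : ∀ i j, HasCompactSupport fun p => x p i j := fun i j =>
    hxc.comp_left (g := fun A : Mat4 => A i j) rfl
  have hlim := (tendsto_finsetSum Finset.univ fun i _ => tendsto_finsetSum Finset.univ fun j _ =>
    hS.tendsto_component hy h0 hg hgc hg1 i j (hx i j) (hxij i j)).const_mul k
  have hinti : ∀ i j, Integrable fun s => v i * v j * x (y s) i j := fun i j =>
    (continuous_const.mul ((hx i j).continuous.comp hy.continuous)).integrable_of_hasCompactSupport
      (hasCompactSupport_comp_curve h0 (hxij i j)).mul_left
  convert hlim using 2 with n
  · rw [mul_assoc]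
    congr 1
    rw [← integral_const_mul]
    simp only [minner, Finset.mul_sum]
    have hint : ∀ i j, Integrable fun p => (c n • Tn n p) i j * x p i j := fun i j =>
      hS.integrable n i j (hx i j).continuous (hxij i j)
    simp only [← mul_assoc]
    simp only [Matrix.smul_apply, smul_eq_mul] at hint ⊢
    rw [integral_finsetSum _ fun i _ => integrable_finsetSum _ fun j _ => hint i j]
    exact Finset.sum_congr rfl fun i _ => integral_finsetSum _ fun j _ => hint i j
  · set F : ℝ → ℝ := fun s => ∑ i, ∑ j, v i * v j * x (y s) i j with hF
    have h1 : ∀ t, ∑ i, ∑ j, deriv γ t i * deriv γ t j * x (γ t) i j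
        = k ^ 2 * F (k * t + γ 0 0) := by
      intro t
      simp only [hF, Finset.mul_sum]
      refine Finset.sum_congr rfl fun i _ => Finset.sum_congr rfl fun j _ => ?_
      rw [← hγt t, ← hγy t, hγ' t, hkt t]
      simp only [Pi.smul_apply, smul_eq_mul]
      ring
    simp only [h1, hyv]
    rw [integral_const_mul, Measure.integral_comp_mul_left (fun s => F (s + γ 0 0)) k,
      integral_add_right_eq_self F, abs_of_pos (inv_pos.2 hk0), smul_eq_mul, ← mul_assoc,
      show k ^ 2 * k⁻¹ = k by field_simp]
    congr 1
    simp only [hF]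
    rw [integral_finsetSum _ fun i _ => integrable_finsetSum _ fun j _ => hinti i j]
    exact Finset.sum_congr rfl fun i _ => integral_finsetSum _ fun j _ => hinti i j
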